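/- Let n ≥ 6, 1 ≤ k ≤ n, and let S be a primitive non-powerful signed digraph of order n whose underlying digraph D is isomorphic to neither D₁ nor D₂. Then L(S,k) ≤ (2n-k)(n-1) - 3. -/

import Mathlib

/-- There is a walk of length `l` from `u` to `v` in the digraph with arc relation `A`. -/
def HasWalk {n : ℕ} (A : Fin n → Fin n → Prop) (u v : Fin n) (l : ℕ) : Prop :=
  ∃ f : ℕ → Fin n, f 0 = u ∧ f l = v ∧ ∀ i < l, A (f i) (f (i + 1))

/-- A digraph is primitive if for some `p > 0` every ordered pair of vertices is
joined by a walk of length exactly `p`. -/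
def Primitive {n : ℕ} (A : Fin n → Fin n → Prop) : Prop :=
  ∃ p, 0 < p ∧ ∀ u v : Fin n, HasWalk A u v p

/-- `f` is the vertex sequence of a walk of length `l` from `u` to `v` in `A`. -/
def IsWalkSeq {n : ℕ} (A : Fin n → Fin n → Prop) (f : ℕ → Fin n) (u v : Fin n) (l : ℕ) : Prop :=
  f 0 = u ∧ f l = v ∧ ∀ i < l, A (f i) (f (i + 1))

/-- The sign of (the length-`l` initial part of) the walk with vertex sequence `f`
in the signed digraph `S`. -/
def walkSign {n : ℕ} (S : Fin n → Fin n → ℤ) (f : ℕ → Fin n) (l : ℕ) : ℤ :=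
  ∏ i ∈ Finset.range l, S (f i) (f (i + 1))

/-- The underlying digraph of a signed digraph `S`. -/
def Underlying {n : ℕ} (S : Fin n → Fin n → ℤ) : Fin n → Fin n → Prop :=
  fun u v => S u v ≠ 0

/-- All entries of `S` are in `{0, 1, -1}`: `S` is a sign pattern / signed digraph. -/
def SignPattern {n : ℕ} (S : Fin n → Fin n → ℤ) : Prop :=
  ∀ u v, S u v = 0 ∨ S u v = 1 ∨ S u v = -1

/-- There is a pair of SSSD walks of length `l` from `u` to `v`: two walks with the
same endpoints and length but different signs. -/
def HasSSSD {n : ℕ} (S : Fin n → Fin n → ℤ) (u v : Fin n) (l : ℕ) : Prop :=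
  ∃ f g : ℕ → Fin n, IsWalkSeq (Underlying S) f u v l ∧ IsWalkSeq (Underlying S) g u v l ∧
    walkSign S f l ≠ walkSign S g l

/-- A signed digraph is non-powerful iff it contains a pair of SSSD walks. -/
def NonPowerful {n : ℕ} (S : Fin n → Fin n → ℤ) : Prop :=
  ∃ u v l, HasSSSD S u v l

/-- `exp_D(X)`: the least `p` such that every vertex is reachable from some vertex
of `X` by a walk of length exactly `p`. -/
noncomputable def setExp {n : ℕ} (A : Fin n → Fin n → Prop) (X : Finset (Fin n)) : ℕ :=
  sInf {p | ∀ v, ∃ x ∈ X, HasWalk A x v p}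

/-- `F(D,k)`: the `k`th upper multiexponent. -/
noncomputable def upperMultiexp {n : ℕ} (A : Fin n → Fin n → Prop) (k : ℕ) : ℕ :=
  sSup {e | ∃ X : Finset (Fin n), X.card = k ∧ setExp A X = e}

/-- `l_S(X)`: the least `p` such that every vertex admits a pair of SSSD walks of
length `p` from some vertex of `X`. -/
noncomputable def setBase {n : ℕ} (S : Fin n → Fin n → ℤ) (X : Finset (Fin n)) : ℕ :=
  sInf {p | ∀ v, ∃ x ∈ X, HasSSSD S x v p}

/-- `L(S,k)`: the `k`th upper base. -/
noncomputable def upperBase {n : ℕ} (S : Fin n → Fin n → ℤ) (k : ℕ) : ℕ :=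
  sSup {e | ∃ X : Finset (Fin n), X.card = k ∧ setBase S X = e}

/-- Distance from `u` to `v` in the digraph `A`. -/
noncomputable def ddist {n : ℕ} (A : Fin n → Fin n → Prop) (u v : Fin n) : ℕ :=
  sInf {l | HasWalk A u v l}

/-- Diameter of the digraph `A`. -/
noncomputable def diam {n : ℕ} (A : Fin n → Fin n → Prop) : ℕ :=
  sSup {d | ∃ u v : Fin n, ddist A u v = d}

/-- `f` is the vertex sequence of a cycle of length `p` in `A`: a closed walk of
length `p` whose first `p` vertices are pairwise distinct. -/
def IsCycleSeq {n : ℕ} (A : Fin n → Fin n → Prop) (f : ℕ → Fin n) (p : ℕ) : Prop :=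
  0 < p ∧ f p = f 0 ∧ (∀ i < p, A (f i) (f (i + 1))) ∧
    ∀ i < p, ∀ j < p, f i = f j → i = j

/-- The digraph `D₁` on `{1,…,n}` (vertex `i` is index `i-1`): the Hamiltonian cycle
`1→2→⋯→n→1` together with the extra arc `(n-1)→1`. -/
def D1 (n : ℕ) : Fin n → Fin n → Prop := fun u v =>
  (v.val = u.val + 1) ∨ (u.val = n - 1 ∧ v.val = 0) ∨ (u.val = n - 2 ∧ v.val = 0)

/-- The digraph `D₂`: `D₁` together with the extra arc `(n)→2`. -/
def D2 (n : ℕ) : Fin n → Fin n → Prop := fun u v =>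
  D1 n u v ∨ (u.val = n - 1 ∧ v.val = 1)

/-- Isomorphism of digraphs on the same vertex set `Fin n`. -/
def DigraphIso {n : ℕ} (A B : Fin n → Fin n → Prop) : Prop :=
  ∃ e : Fin n ≃ Fin n, ∀ u v, A u v ↔ B (e u) (e v)

/-!
Let `s` be the length of a shortest cycle of the underlying digraph.

If `s ≥ n - 1`, primitivity forces a Hamiltonian cycle, and every other arc skips exactly one of
its vertices. Two skips that can be used in the same round would give a cycle of length `n - 2`,
so there are at most two of them and they are consecutive: the digraph is `D₁` or `D₂`.

If `s ≤ n - 2`, non-powerfulness gives cycles of lengths `p`, `q` and signs `σ`, `τ` with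
`σ ^ q ≠ τ ^ p`, and from these every vertex is the end of an SSSD pair of length at most
`n (n - 1) - 4`. The critical case is that of lengths `n` and `n - 1`. If neither cycle is
distinguished from the short one, then `(n - s - 1) n + s = (n - s) (n - 1)` yields an SSSD pair of
this length: `n - s - 1` turns around the Hamiltonian cycle and one around the short cycle, against
`n - s` turns around the cycle of length `n - 1`. Finally, any `k` vertices reach every vertex in
exactly `t` steps for all `t ≥ n - s + s (n - k)`: walking in steps of length `s`, the set of
vertices that reach a given vertex of the short cycle gains a new one at each step.
-/

section

variable {n : ℕ} {A : Fin n → Fin n → Prop} {S : Fin n → Fin n → ℤ} {u v w : Fin n}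
  {f g : ℕ → Fin n} {a b l p q : ℕ}

/-! ### Walks -/

/-- The concatenation of the length-`a` initial part of `f` with `g`; it is a walk when
`f a = g 0`. -/
def concatSeq {α : Type*} (f g : ℕ → α) (a : ℕ) : ℕ → α :=
  fun i => if i < a then f i else g (i - a)

theorem concatSeq_of_le {α : Type*} {f g : ℕ → α} {a i : ℕ} (h : f a = g 0) (hi : i ≤ a) :
    concatSeq f g a i = f i := by
  rcases hi.lt_or_eq with hi | rfl
  · exact if_pos hi
  · simp [concatSeq, h]

theorem concatSeq_add {α : Type*} (f g : ℕ → α) (a i : ℕ) :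
    concatSeq f g a (a + i) = g i := by
  simp [concatSeq]

theorem IsWalkSeq.concat (hf : IsWalkSeq A f u v a) (hg : IsWalkSeq A g v w b) :
    IsWalkSeq A (concatSeq f g a) u w (a + b) := by
  obtain ⟨f_start, f_end, f_arc⟩ := hf
  obtain ⟨g_start, g_end, g_arc⟩ := hg
  have glue : f a = g 0 := f_end.trans g_start.symm
  refine ⟨by rw [concatSeq_of_le glue a.zero_le, f_start], by rw [concatSeq_add, g_end], ?_⟩
  intro i hi
  rcases lt_or_ge i a with hia | hia
  · rw [concatSeq_of_le glue hia.le, concatSeq_of_le glue hia]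
    exact f_arc i hia
  · obtain ⟨j, rfl⟩ := Nat.exists_eq_add_of_le hia
    rw [add_assoc, concatSeq_add, concatSeq_add]
    exact g_arc j (by omega)

theorem IsWalkSeq.take (hf : IsWalkSeq A f u v l) (hal : a ≤ l) : IsWalkSeq A f u (f a) a :=
  ⟨hf.1, rfl, fun i hi => hf.2.2 i (hi.trans_le hal)⟩

theorem IsWalkSeq.segment (hf : IsWalkSeq A f u v l) (hab : a + b ≤ l) :
    IsWalkSeq A (fun i => f (a + i)) (f a) (f (a + b)) b :=
  ⟨rfl, rfl, fun i _ => hf.2.2 (a + i) (by omega)⟩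

theorem walkSign_add (S : Fin n → Fin n → ℤ) (f : ℕ → Fin n) (a b : ℕ) :
    walkSign S f (a + b) = walkSign S f a * walkSign S (fun i => f (a + i)) b :=
  Finset.prod_range_add _ _ _

theorem walkSign_concatSeq (h : f a = g 0) (b : ℕ) :
    walkSign S (concatSeq f g a) (a + b) = walkSign S f a * walkSign S g b := by
  have initial_sign : walkSign S (concatSeq f g a) a = walkSign S f a := by
    refine Finset.prod_congr rfl fun i hi => ?_
    have hia : i < a := Finset.mem_range.1 hi
    rw [concatSeq_of_le h hia.le, concatSeq_of_le h hia]
  simp only [walkSign_add, initial_sign, concatSeq_add]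

theorem IsWalkSeq.walkSign_ne_zero (hf : IsWalkSeq (Underlying S) f u v l) :
    walkSign S f l ≠ 0 :=
  Finset.prod_ne_zero_iff.2 fun i hi => hf.2.2 i (Finset.mem_range.1 hi)

theorem hasWalk_zero (A : Fin n → Fin n → Prop) (u : Fin n) : HasWalk A u u 0 :=
  ⟨fun _ => u, rfl, rfl, by simp⟩

theorem hasWalk_one (h : A u v) : HasWalk A u v 1 :=
  ⟨fun i => if i = 0 then u else v, by simp, by simp, by simpa using h⟩

theorem HasWalk.append : HasWalk A u v a → HasWalk A v w b → HasWalk A u w (a + b) :=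
  fun ⟨_, hf⟩ ⟨_, hg⟩ => ⟨_, IsWalkSeq.concat hf hg⟩

theorem HasWalk.split (h : HasWalk A u v (a + b)) :
    ∃ w, HasWalk A u w a ∧ HasWalk A w v b := by
  obtain ⟨f, hf : IsWalkSeq A f u v (a + b)⟩ := h
  exact ⟨f a, ⟨f, hf.take (Nat.le_add_right a b)⟩, fun i => f (a + i),
    hf.2.1 ▸ hf.segment le_rfl⟩

theorem HasWalk.reflTransGen (h : HasWalk A u v (l * p)) :
    Relation.ReflTransGen (fun x y => HasWalk A x y p) u v := by
  induction l generalizing v with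
  | zero =>
    obtain ⟨f, rfl, rfl, -⟩ := h
    rw [Nat.zero_mul]
  | succ l ih =>
    rw [Nat.succ_mul] at h
    obtain ⟨w, huw, hwv⟩ := h.split
    exact (ih huw).tail hwv

/-- `S` has a walk of length `l` from `u` to `v` whose sign is `σ`. -/
def HasSignedWalk (S : Fin n → Fin n → ℤ) (u v : Fin n) (l : ℕ) (σ : ℤ) : Prop :=
  ∃ f, IsWalkSeq (Underlying S) f u v l ∧ walkSign S f l = σ

variable {σ τ : ℤ}

theorem HasWalk.exists_hasSignedWalk (h : HasWalk (Underlying S) u v l) :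
    ∃ σ, HasSignedWalk S u v l σ :=
  h.imp' (walkSign S · l) fun f hf => ⟨f, hf, rfl⟩

theorem HasSignedWalk.append (h : HasSignedWalk S u v a σ) (h' : HasSignedWalk S v w b τ) :
    HasSignedWalk S u w (a + b) (σ * τ) := by
  obtain ⟨f, hf, rfl⟩ := h
  obtain ⟨g, hg, rfl⟩ := h'
  exact ⟨_, hf.concat hg, walkSign_concatSeq (hf.2.1.trans hg.1.symm) b⟩

theorem HasSignedWalk.pow (h : HasSignedWalk S u u p σ) (q : ℕ) :
    HasSignedWalk S u u (q * p) (σ ^ q) := by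
  induction q with
  | zero => exact ⟨fun _ => u, by simp [IsWalkSeq], by simp [walkSign]⟩
  | succ q ih =>
    rw [Nat.succ_mul, pow_succ]
    exact ih.append h

theorem HasSignedWalk.ne_zero (h : HasSignedWalk S u v l σ) : σ ≠ 0 := by
  obtain ⟨f, hf, rfl⟩ := h
  exact hf.walkSign_ne_zero

theorem hasSSSD_iff :
    HasSSSD S u v l ↔ ∃ σ τ, HasSignedWalk S u v l σ ∧ HasSignedWalk S u v l τ ∧ σ ≠ τ := by
  constructor
  · rintro ⟨f, g, hf, hg, hne⟩
    exact ⟨_, _, ⟨f, hf, rfl⟩, ⟨g, hg, rfl⟩, hne⟩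
  · rintro ⟨_, _, ⟨f, hf, rfl⟩, ⟨g, hg, rfl⟩, hne⟩
    exact ⟨f, g, hf, hg, hne⟩

theorem HasSSSD.append_hasWalk (h : HasSSSD S u v a) (h' : HasWalk (Underlying S) v w b) :
    HasSSSD S u w (a + b) := by
  obtain ⟨σ, τ, hσ, hτ, hne⟩ := hasSSSD_iff.1 h
  obtain ⟨ρ, hρ⟩ := h'.exists_hasSignedWalk
  exact hasSSSD_iff.2 ⟨_, _, hσ.append hρ, hτ.append hρ, (mul_left_injective₀ hρ.ne_zero).ne hne⟩

theorem HasWalk.append_hasSSSD (h : HasWalk (Underlying S) u v a) (h' : HasSSSD S v w b) :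
    HasSSSD S u w (a + b) := by
  obtain ⟨σ, τ, hσ, hτ, hne⟩ := hasSSSD_iff.1 h'
  obtain ⟨ρ, hρ⟩ := h.exists_hasSignedWalk
  exact hasSSSD_iff.2 ⟨_, _, hρ.append hσ, hρ.append hτ, (mul_right_injective₀ hρ.ne_zero).ne hne⟩

/-! ### Cycles -/

theorem exists_hasSignedWalk_split_of_revisit {i d e : ℕ}
    (hf : IsWalkSeq (Underlying S) f u v (i + d + e)) (hrevisit : f (i + d) = f i) :
    ∃ σ τ, HasSignedWalk S (f i) (f i) d σ ∧ HasSignedWalk S u v (i + e) τ ∧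
      walkSign S f (i + d + e) = σ * τ := by
  have before := hf.take (a := i) (by omega)
  have loop := hf.segment (a := i) (b := d) (by omega)
  have after := hf.segment (a := i + d) (b := e) le_rfl
  rw [hrevisit] at loop after
  rw [hf.2.1] at after
  refine ⟨_, _, ⟨_, loop, rfl⟩, HasSignedWalk.append ⟨_, before, rfl⟩ ⟨_, after, rfl⟩, ?_⟩
  rw [walkSign_add, walkSign_add, mul_right_comm, mul_comm]

theorem exists_isCycleSeq_not {Q : ℕ → ℤ → Prop}
    (hQ : ∀ p q σ τ, Q p σ → Q q τ → Q (p + q) (σ * τ))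
    (hl : 0 < l) (h : HasSignedWalk S u u l σ) (hnot : ¬ Q l σ) :
    ∃ f p, IsCycleSeq (Underlying S) f p ∧ ¬ Q p (walkSign S f p) := by
  induction l using Nat.strong_induction_on generalizing u σ with
  | _ l ih =>
    obtain ⟨f, hf, rfl⟩ := h
    by_cases hrevisit : ∃ i j, i < j ∧ j < l ∧ f j = f i
    · obtain ⟨i, j, hij, hjl, hfij⟩ := hrevisit
      obtain ⟨d, rfl⟩ := Nat.exists_eq_add_of_lt hij
      obtain ⟨e, rfl⟩ := Nat.exists_eq_add_of_lt hjl
      rw [add_assoc i, add_assoc (i + (d + 1))] at *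
      obtain ⟨σ, τ, hloop, hrest, hsign⟩ := exists_hasSignedWalk_split_of_revisit hf hfij
      have hsplit : ¬ (Q (d + 1) σ ∧ Q (i + (e + 1)) τ) := by
        rintro ⟨hσ, hτ⟩
        have hadd : d + 1 + (i + (e + 1)) = i + (d + 1) + (e + 1) := by ring
        exact hnot (hsign ▸ hadd ▸ hQ _ _ _ _ hσ hτ)
      rcases not_and_or.1 hsplit with hσ | hτ
      · exact ih _ (by omega) (by omega) hloop hσ
      · exact ih _ (by omega) (by omega) hrest hτ
    · push Not at hrevisit
      refine ⟨f, l, ⟨hl, hf.2.1.trans hf.1.symm, hf.2.2, fun i hi j hj hij => ?_⟩, hnot⟩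
      by_contra hne
      rcases lt_or_gt_of_ne hne with hlt | hlt
      · exact hrevisit i j hlt hj hij.symm
      · exact hrevisit j i hlt hi hij

theorem exists_isCycleSeq_length_not {Q : ℕ → Prop} (hQ : ∀ p q, Q p → Q q → Q (p + q))
    (hl : 0 < l) (h : HasWalk A u u l) (hnot : ¬ Q l) :
    ∃ f p, IsCycleSeq A f p ∧ ¬ Q p := by
  classical
  obtain ⟨S, rfl⟩ : ∃ S : Fin n → Fin n → ℤ, Underlying S = A :=
    ⟨fun u v => if A u v then 1 else 0, by ext u v; simp [Underlying]⟩
  obtain ⟨σ, hσ⟩ := h.exists_hasSignedWalk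
  exact exists_isCycleSeq_not (Q := fun p _ => Q p) (fun p q _ _ => hQ p q) hl hσ hnot

theorem HasWalk.exists_isCycleSeq_le (h : HasWalk A u u l) (hl : 0 < l) :
    ∃ f p, IsCycleSeq A f p ∧ p ≤ l := by
  obtain ⟨f, p, hf, hp⟩ := exists_isCycleSeq_length_not (Q := (l < ·))
    (fun _ _ hp _ => hp.trans_le (Nat.le_add_right _ _)) hl h (lt_irrefl l)
  exact ⟨f, p, hf, not_lt.1 hp⟩

/-- The set of vertices of the cycle of length `p` with vertex sequence `f`. -/
def cycleVerts (f : ℕ → Fin n) (p : ℕ) : Finset (Fin n) :=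
  (Finset.range p).image f

namespace IsCycleSeq

theorem card_cycleVerts (hf : IsCycleSeq A f p) : (cycleVerts f p).card = p := by
  have hinj : Set.InjOn f (Finset.range p) := fun i hi j hj =>
    hf.2.2.2 i (Finset.mem_range.1 hi) j (Finset.mem_range.1 hj)
  rw [cycleVerts, Finset.card_image_of_injOn hinj, Finset.card_range]

theorem length_le (hf : IsCycleSeq A f p) : p ≤ n :=
  hf.card_cycleVerts ▸ card_finset_fin_le _

theorem cycleVerts_nonempty (hf : IsCycleSeq A f p) : (cycleVerts f p).Nonempty := by
  simpa [cycleVerts] using hf.1.ne'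

theorem cycleVerts_eq_univ (hf : IsCycleSeq A f n) : cycleVerts f n = Finset.univ :=
  Finset.eq_univ_of_card _ (by rw [hf.card_cycleVerts, Fintype.card_fin])

theorem inter_nonempty (hf : IsCycleSeq A f p) (hg : IsCycleSeq A g q) (hpq : n < p + q) :
    (cycleVerts f p ∩ cycleVerts g q).Nonempty := by
  refine Finset.inter_nonempty_of_card_lt_card_add_card (Finset.subset_univ _)
    (Finset.subset_univ _) ?_
  rwa [hf.card_cycleVerts, hg.card_cycleVerts, Finset.card_univ, Fintype.card_fin]

theorem add_le_card_inter (hf : IsCycleSeq A f p) (hg : IsCycleSeq A g q) :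
    p + q ≤ n + (cycleVerts f p ∩ cycleVerts g q).card := by
  have hunion := card_finset_fin_le (cycleVerts f p ∪ cycleVerts g q)
  have hcard := Finset.card_union_add_card_inter (cycleVerts f p) (cycleVerts g q)
  rw [hf.card_cycleVerts, hg.card_cycleVerts] at hcard
  omega

theorem walkSign_ne_zero (hf : IsCycleSeq (Underlying S) f p) : walkSign S f p ≠ 0 :=
  IsWalkSeq.walkSign_ne_zero ⟨rfl, rfl, hf.2.2.1⟩

theorem hasSignedWalk (hf : IsCycleSeq (Underlying S) f p) (hu : u ∈ cycleVerts f p) :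
    HasSignedWalk S u u p (walkSign S f p) := by
  simp only [cycleVerts, Finset.mem_image, Finset.mem_range] at hu
  obtain ⟨i, hi, rfl⟩ := hu
  obtain ⟨d, rfl⟩ := Nat.exists_eq_add_of_le hi.le
  have to_i : IsWalkSeq (Underlying S) f (f 0) (f i) i :=
    ⟨rfl, rfl, fun j hj => hf.2.2.1 j (by omega)⟩
  have from_i : IsWalkSeq (Underlying S) (fun j => f (i + j)) (f i) (f 0) d :=
    ⟨rfl, hf.2.1, fun j hj => hf.2.2.1 (i + j) (by omega)⟩
  rw [walkSign_add, mul_comm, add_comm]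
  exact HasSignedWalk.append ⟨_, from_i, rfl⟩ ⟨_, to_i, rfl⟩

theorem arc_mod (hf : IsCycleSeq A f p) (i : ℕ) : A (f (i % p)) (f ((i + 1) % p)) := by
  have harc := hf.2.2.1 (i % p) (Nat.mod_lt i hf.1)
  rw [← Nat.mod_add_mod]
  rcases (show i % p + 1 ≤ p from Nat.mod_lt i hf.1).lt_or_eq with hlt | heq
  · rwa [Nat.mod_eq_of_lt hlt]
  · rw [heq, Nat.mod_self, ← hf.2.1]
    rwa [heq] at harc

theorem hasWalk_mod (hf : IsCycleSeq A f p) (i d : ℕ) :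
    HasWalk A (f (i % p)) (f ((i + d) % p)) d :=
  ⟨fun j => f ((i + j) % p), rfl, rfl, fun j _ => hf.arc_mod (i + j)⟩

theorem exists_mem_hasWalk (hf : IsCycleSeq A f p) (hu : u ∈ cycleVerts f p) (m : ℕ) :
    ∃ w ∈ cycleVerts f p, HasWalk A w u m := by
  simp only [cycleVerts, Finset.mem_image, Finset.mem_range] at hu
  obtain ⟨i, hi, rfl⟩ := hu
  obtain ⟨r, rfl⟩ : ∃ r, p = r + 1 := ⟨p - 1, (Nat.sub_add_cancel hf.1).symm⟩
  have hwalk := hf.hasWalk_mod (i + m * r) m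
  have hend : i + m * r + m = i + m * (r + 1) := by ring
  rw [hend, Nat.add_mul_mod_self_right, Nat.mod_eq_of_lt hi] at hwalk
  exact ⟨_, Finset.mem_image_of_mem f (Finset.mem_range.2 (Nat.mod_lt _ hf.1)), hwalk⟩

theorem hasWalk_self (hf : IsCycleSeq A f p) (hu : u ∈ cycleVerts f p) : HasWalk A u u p := by
  simp only [cycleVerts, Finset.mem_image, Finset.mem_range] at hu
  obtain ⟨i, hi, rfl⟩ := hu
  have hwalk := hf.hasWalk_mod i p
  rwa [Nat.add_mod_right, Nat.mod_eq_of_lt hi] at hwalk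

end IsCycleSeq

/-! ### Reachability in primitive digraphs -/

theorem exists_rel_of_nonempty_of_ne_univ {α : Type*} [Fintype α] {r : α → α → Prop}
    (hr : ∀ x y, Relation.ReflTransGen r x y) {R : Finset α} (hR : R.Nonempty)
    (huniv : R ≠ Finset.univ) : ∃ x ∈ R, ∃ y ∉ R, r x y := by
  by_contra! hclosed
  obtain ⟨x, hx⟩ := hR
  refine huniv (Finset.eq_univ_of_forall fun y => ?_)
  induction hr x y with
  | refl => exact hx
  | tail _ hyz hy =>
    by_contra hz
    exact hclosed _ hy _ hz hyz

theorem min_card_le_card_of_expanding {α : Type*} [Fintype α] {r : α → α → Prop}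
    (hr : ∀ x y, Relation.ReflTransGen r x y) {R : ℕ → Finset α} (hR : (R 0).Nonempty)
    (hmono : ∀ i, R i ⊆ R (i + 1)) (hstep : ∀ i, ∀ x ∈ R i, ∀ y, r x y → y ∈ R (i + 1)) (i : ℕ) :
    min (Fintype.card α) ((R 0).card + i) ≤ (R i).card := by
  induction i with
  | zero => exact min_le_right _ _
  | succ i ih =>
    by_cases huniv : R i = Finset.univ
    · have hnext : R (i + 1) = Finset.univ := Finset.univ_subset_iff.1 (huniv ▸ hmono i)
      rw [hnext, Finset.card_univ]
      exact min_le_left _ _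
    · have hRi : (R i).Nonempty := hR.mono (monotone_nat_of_le_succ hmono i.zero_le)
      obtain ⟨x, hx, y, hy, hxy⟩ := exists_rel_of_nonempty_of_ne_univ hr hRi huniv
      have hlt : (R i).card < (R (i + 1)).card :=
        Finset.card_lt_card ((hmono i).ssubset_of_not_subset fun h =>
          hy (h (hstep i x hx y hxy)))
      omega

namespace Primitive

theorem exists_hasWalk_self_ge (hA : Primitive A) (u : Fin n) (t : ℕ) :
    ∃ l, t ≤ l ∧ HasWalk A u u l := by
  obtain ⟨p, hp, hwalk⟩ := hA
  refine ⟨t * p, Nat.le_mul_of_pos_right t hp, ?_⟩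
  induction t with
  | zero => exact (Nat.zero_mul p).symm ▸ hasWalk_zero A u
  | succ t ih => exact (Nat.succ_mul t p).symm ▸ ih.append (hwalk u u)

theorem exists_hasWalk_from (hA : Primitive A) (u : Fin n) (t : ℕ) : ∃ w, HasWalk A u w t := by
  obtain ⟨l, hl, hwalk⟩ := hA.exists_hasWalk_self_ge u t
  rw [← Nat.add_sub_cancel' hl] at hwalk
  exact hwalk.split.imp fun _ => And.left

theorem exists_hasWalk_to (hA : Primitive A) (v : Fin n) (t : ℕ) : ∃ w, HasWalk A w v t := by
  obtain ⟨l, hl, hwalk⟩ := hA.exists_hasWalk_self_ge v t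
  rw [← Nat.sub_add_cancel hl] at hwalk
  exact hwalk.split.imp fun _ => And.right

theorem exists_forall_ge_hasWalk (hA : Primitive A) :
    ∃ p, 0 < p ∧ ∀ q ≥ p, ∀ u v, HasWalk A u v q := by
  obtain ⟨p, hp, hwalk⟩ := id hA
  refine ⟨p, hp, fun q hq u v => ?_⟩
  obtain ⟨w, huw⟩ := hA.exists_hasWalk_from u (q - p)
  exact Nat.sub_add_cancel hq ▸ huw.append (hwalk w v)

theorem reflTransGen_hasWalk (hA : Primitive A) {s : ℕ} (hs : 0 < s) (u v : Fin n) :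
    Relation.ReflTransGen (fun x y => HasWalk A x y s) u v := by
  obtain ⟨p, -, hwalk⟩ := hA.exists_forall_ge_hasWalk
  exact (hwalk (p * s) (Nat.le_mul_of_pos_right p hs) u v).reflTransGen

theorem exists_isCycleSeq_not_dvd (hA : Primitive A) (hn : 0 < n) {d : ℕ} (hd : d ≠ 1) :
    ∃ f p, IsCycleSeq A f p ∧ ¬ d ∣ p := by
  obtain ⟨p, hp, hwalk⟩ := hA.exists_forall_ge_hasWalk
  have hconsecutive : ¬ (d ∣ p ∧ d ∣ p + 1) := fun ⟨h, h'⟩ =>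
    hd (Nat.dvd_one.1 ((Nat.dvd_add_right h).1 h'))
  rcases not_and_or.1 hconsecutive with h | h
  · exact exists_isCycleSeq_length_not (fun _ _ => Dvd.dvd.add) hp
      (hwalk p le_rfl ⟨0, hn⟩ ⟨0, hn⟩) h
  · exact exists_isCycleSeq_length_not (fun _ _ => Dvd.dvd.add) p.succ_pos
      (hwalk (p + 1) p.le_succ ⟨0, hn⟩ ⟨0, hn⟩) h

theorem exists_hasWalk_le (hA : Primitive A) {V : Finset (Fin n)} (hV : V.Nonempty)
    (v : Fin n) : ∃ u ∈ V, ∃ l ≤ n - V.card, HasWalk A u v l := by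
  classical
  let ball (i : ℕ) : Finset (Fin n) := {x | ∃ u ∈ V, ∃ l ≤ i, HasWalk A u x l}
  have hball {i x} : x ∈ ball i ↔ ∃ u ∈ V, ∃ l ≤ i, HasWalk A u x l := by simp [ball]
  have hV_sub : V ⊆ ball 0 := fun x hx => hball.2 ⟨x, hx, 0, le_rfl, hasWalk_zero A x⟩
  have hcard := min_card_le_card_of_expanding (hA.reflTransGen_hasWalk one_pos) (hV.mono hV_sub)
    (fun i x hx => by
      obtain ⟨u, hu, l, hl, hux⟩ := hball.1 hx
      exact hball.2 ⟨u, hu, l, hl.trans i.le_succ, hux⟩)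
    (fun i x hx y hxy => by
      obtain ⟨u, hu, l, hl, hux⟩ := hball.1 hx
      exact hball.2 ⟨u, hu, l + 1, Nat.succ_le_succ hl, hux.append hxy⟩)
    (n - V.card)
  have huniv : ball (n - V.card) = Finset.univ := by
    refine Finset.eq_univ_of_card _ (le_antisymm (Finset.card_le_univ _) (le_trans ?_ hcard))
    have := Finset.card_le_card hV_sub
    rw [Fintype.card_fin]
    omega
  exact hball.1 (huniv ▸ Finset.mem_univ v)

theorem exists_hasWalk_le_pred (hA : Primitive A) (u v : Fin n) :
    ∃ l ≤ n - 1, HasWalk A u v l := by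
  simpa using hA.exists_hasWalk_le (Finset.singleton_nonempty u) v

theorem exists_mem_cycleVerts_hasWalk (hA : Primitive A) (hf : IsCycleSeq A f p)
    {t : ℕ} (ht : n - p ≤ t) (v : Fin n) : ∃ c ∈ cycleVerts f p, HasWalk A c v t := by
  obtain ⟨u, hu, l, hl, huv⟩ := hA.exists_hasWalk_le hf.cycleVerts_nonempty v
  rw [hf.card_cycleVerts] at hl
  obtain ⟨c, hc, hcu⟩ := hf.exists_mem_hasWalk hu (t - l)
  exact ⟨c, hc, Nat.sub_add_cancel (hl.trans ht) ▸ hcu.append huv⟩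

theorem exists_mem_hasWalk_of_hasWalk_self (hA : Primitive A) {s : ℕ} (hs : 0 < s)
    (hv : HasWalk A v v s) {X : Finset (Fin n)} (hX : X.Nonempty) :
    ∃ x ∈ X, HasWalk A x v ((n - X.card) * s) := by
  classical
  let sources (i : ℕ) : Finset (Fin n) := {x | HasWalk A x v (i * s)}
  have hsources {i x} : x ∈ sources i ↔ HasWalk A x v (i * s) := by simp [sources]
  have hv_mem : v ∈ sources 0 := hsources.2 ((Nat.zero_mul s).symm ▸ hasWalk_zero A v)
  have hcard := min_card_le_card_of_expanding (r := fun x y => HasWalk A y x s)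
    (fun x y => Relation.reflTransGen_swap.2 (hA.reflTransGen_hasWalk hs y x)) ⟨v, hv_mem⟩
    (fun i x hx => hsources.2 ((Nat.succ_mul i s).symm ▸ (hsources.1 hx).append hv))
    (fun i x hx y hyx => hsources.2 (by
      rw [Nat.succ_mul, add_comm]
      exact hyx.append (hsources.1 hx)))
    (n - X.card)
  have hmeet : (X ∩ sources (n - X.card)).Nonempty := by
    refine Finset.inter_nonempty_of_card_lt_card_add_card (Finset.subset_univ _)
      (Finset.subset_univ _) ?_
    have hXpos := hX.card_pos
    have hone : 0 < (sources 0).card := Finset.card_pos.2 ⟨v, hv_mem⟩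
    simp only [Finset.card_univ, Fintype.card_fin] at hcard ⊢
    omega
  obtain ⟨x, hx⟩ := hmeet
  exact ⟨x, Finset.mem_of_mem_inter_left hx, hsources.1 (Finset.mem_of_mem_inter_right hx)⟩

theorem exists_mem_hasWalk (hA : Primitive A) (hf : IsCycleSeq A f p) {X : Finset (Fin n)}
    (hX : X.Nonempty) {t : ℕ} (ht : n - p + (n - X.card) * p ≤ t) (v : Fin n) :
    ∃ x ∈ X, HasWalk A x v t := by
  obtain ⟨c, hc, hcv⟩ :=
    hA.exists_mem_cycleVerts_hasWalk hf (t := t - (n - X.card) * p) (by omega) v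
  obtain ⟨x, hx, hxc⟩ := hA.exists_mem_hasWalk_of_hasWalk_self hf.1 (hf.hasWalk_self hc) hX
  exact ⟨x, hx, Nat.add_sub_cancel' (by omega : (n - X.card) * p ≤ t) ▸ hxc.append hcv⟩

end Primitive

/-! ### Distinguished cycle pairs -/

/-- Every vertex is the endpoint of a pair of SSSD walks of length at most `M`. -/
def SSSDBound (S : Fin n → Fin n → ℤ) (M : ℕ) : Prop :=
  ∀ v, ∃ u, ∃ l ≤ M, HasSSSD S u v l

theorem SSSDBound.mono {M N : ℕ} (h : SSSDBound S M) (hMN : M ≤ N) : SSSDBound S N := fun v =>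
  let ⟨u, l, hl, huv⟩ := h v
  ⟨u, l, hl.trans hMN, huv⟩

theorem sssdBound_of_forall_mem_hasSSSD (hS : Primitive (Underlying S)) {V : Finset (Fin n)}
    (hV : V.Nonempty) {m : ℕ} (h : ∀ u ∈ V, HasSSSD S u u m) :
    SSSDBound S (m + (n - V.card)) := fun v =>
  let ⟨u, hu, l, hl, huv⟩ := hS.exists_hasWalk_le hV v
  ⟨u, m + l, Nat.add_le_add_left hl m, (h u hu).append_hasWalk huv⟩

/-- The cycles `f`, `g` of lengths `p`, `q` form a distinguished pair: going around `f` `q` times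
and around `g` `p` times gives walks of equal length and different signs. For signs `±1` this says
that either one length is odd and the cycle of even length is negative, or both lengths are odd
and the signs are opposite. -/
structure IsDistinguishedPair (S : Fin n → Fin n → ℤ) (f : ℕ → Fin n) (p : ℕ)
    (g : ℕ → Fin n) (q : ℕ) : Prop where
  left : IsCycleSeq (Underlying S) f p
  right : IsCycleSeq (Underlying S) g q
  sign_ne : walkSign S f p ^ q ≠ walkSign S g q ^ p

theorem exists_isDistinguishedPair (hS : Primitive (Underlying S)) (hnp : NonPowerful S) :
    ∃ f p g q, IsDistinguishedPair S f p g q := by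
  obtain ⟨u, v, l, huv⟩ := hnp
  obtain ⟨r, hr, hwalk⟩ := hS.exists_forall_ge_hasWalk
  obtain ⟨σ, τ, hσ, hτ, hne⟩ := hasSSSD_iff.1 (huv.append_hasWalk (hwalk r le_rfl v u))
  obtain ⟨g, q, hg, hq⟩ := hS.exists_isCycleSeq_not_dvd u.pos (d := 2) (by norm_num)
  have hq_odd : Odd q := Nat.not_even_iff_odd.1 (mt even_iff_two_dvd.1 hq)
  let Q (p : ℕ) (ρ : ℤ) : Prop := ρ ^ q = walkSign S g q ^ p
  have hQ (a b ρ ρ') (h : Q a ρ) (h' : Q b ρ') : Q (a + b) (ρ * ρ') := by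
    simp only [Q] at h h' ⊢
    rw [mul_pow, pow_add, h, h']
  have hnot : ¬ (Q (l + r) σ ∧ Q (l + r) τ) := fun ⟨h, h'⟩ =>
    hne (hq_odd.pow_injective (h.trans h'.symm))
  rcases not_and_or.1 hnot with h | h
  · obtain ⟨f, p, hf, hne⟩ := exists_isCycleSeq_not hQ (by omega) hσ h
    exact ⟨f, p, g, q, hf, hg, hne⟩
  · obtain ⟨f, p, hf, hne⟩ := exists_isCycleSeq_not hQ (by omega) hτ h
    exact ⟨f, p, g, q, hf, hg, hne⟩

namespace IsDistinguishedPair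

theorem symm (h : IsDistinguishedPair S f p g q) : IsDistinguishedPair S g q f p :=
  ⟨h.right, h.left, h.sign_ne.symm⟩

theorem sssdBound_of_inter_nonempty (h : IsDistinguishedPair S f p g q)
    (hS : Primitive (Underlying S)) (hI : (cycleVerts f p ∩ cycleVerts g q).Nonempty) :
    SSSDBound S (q * p + (n - (cycleVerts f p ∩ cycleVerts g q).card)) := by
  refine sssdBound_of_forall_mem_hasSSSD hS hI fun u hu => ?_
  have around_f := (h.left.hasSignedWalk (Finset.mem_of_mem_inter_left hu)).pow q
  have around_g := (h.right.hasSignedWalk (Finset.mem_of_mem_inter_right hu)).pow p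
  exact hasSSSD_iff.2 ⟨_, _, around_f, mul_comm p q ▸ around_g, h.sign_ne⟩

theorem sssdBound (h : IsDistinguishedPair S f p g q) (hS : Primitive (Underlying S)) :
    SSSDBound S (q * p + 2 * (n - 1)) := by
  intro v
  obtain ⟨u, hu⟩ := h.left.cycleVerts_nonempty
  obtain ⟨w, hw⟩ := h.right.cycleVerts_nonempty
  obtain ⟨a, ha, huw⟩ := hS.exists_hasWalk_le_pred u w
  obtain ⟨b, hb, hwv⟩ := hS.exists_hasWalk_le_pred w v
  obtain ⟨ρ, hρ⟩ := huw.exists_hasSignedWalk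
  have f_first := ((h.left.hasSignedWalk hu).pow q).append hρ
  have g_last := hρ.append ((h.right.hasSignedWalk hw).pow p)
  rw [add_comm, mul_comm p q, mul_comm ρ] at g_last
  have hpair : HasSSSD S u w (q * p + a) :=
    hasSSSD_iff.2 ⟨_, _, f_first, g_last, (mul_left_injective₀ hρ.ne_zero).ne h.sign_ne⟩
  exact ⟨u, q * p + a + b, by omega, hpair.append_hasWalk hwv⟩

end IsDistinguishedPair

theorem IsDistinguishedPair.sssdBound_of_length_le (h : IsDistinguishedPair S f p g q)
    (hn : 6 ≤ n) (hS : Primitive (Underlying S)) (hq : q ≤ n - 2) :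
    SSSDBound S (n * (n - 1) - 4) := by
  have hp := h.left.length_le
  have hcard := h.left.add_le_card_inter h.right
  obtain ⟨m, rfl⟩ : ∃ m, n = m + 2 := ⟨n - 2, by omega⟩
  rw [Nat.add_sub_cancel] at hq
  by_cases hI : (cycleVerts f p ∩ cycleVerts g q).Nonempty
  · refine (h.sssdBound_of_inter_nonempty hS hI).mono (Nat.le_sub_of_add_le ?_)
    have hIpos := hI.card_pos
    rcases hp.eq_or_lt with rfl | hp
    · have hsub : m + 2 - (cycleVerts f (m + 2) ∩ cycleVerts g q).card + q ≤ m + 2 := by omega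
      simp only [Nat.add_succ_sub_one]
      nlinarith
    · have hqp : q * p ≤ m * (m + 1) := Nat.mul_le_mul hq (by omega)
      have hsub : m + 2 - (cycleVerts f p ∩ cycleVerts g q).card ≤ m + 1 := by omega
      simp only [Nat.add_succ_sub_one]
      nlinarith
  · refine (h.sssdBound hS).mono (Nat.le_sub_of_add_le ?_)
    rw [Finset.not_nonempty_iff_eq_empty.1 hI, Finset.card_empty, add_zero] at hcard
    have hqp : 4 * q * p ≤ (m + 2) ^ 2 := (four_mul_le_sq_add q p).trans
      (Nat.pow_le_pow_left (by omega) 2)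
    simp only [Nat.add_succ_sub_one]
    nlinarith

theorem sssdBound_of_length_eq (hS : Primitive (Underlying S))
    (hf : IsCycleSeq (Underlying S) f p) (hg : IsCycleSeq (Underlying S) g p)
    (hp : n < p + p) (hne : walkSign S f p ≠ walkSign S g p) : SSSDBound S (p + (n - 1)) := by
  have hI := hf.inter_nonempty hg hp
  have hbound := sssdBound_of_forall_mem_hasSSSD hS hI fun u hu => hasSSSD_iff.2
    ⟨_, _, hf.hasSignedWalk (Finset.mem_of_mem_inter_left hu),
      hg.hasSignedWalk (Finset.mem_of_mem_inter_right hu), hne⟩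
  exact hbound.mono (Nat.add_le_add_left (Nat.sub_le_sub_left hI.card_pos n) p)

theorem sssdBound_of_hamiltonian_triple (hS : Primitive (Underlying S)) {e : ℕ → Fin n} {s : ℕ}
    (hf : IsCycleSeq (Underlying S) f n) (hg : IsCycleSeq (Underlying S) g (n - 1))
    (he : IsCycleSeq (Underlying S) e s) (hs : 2 ≤ s) (hsn : s < n)
    (hne : walkSign S f n ^ (n - s - 1) * walkSign S e s ≠ walkSign S g (n - 1) ^ (n - s)) :
    SSSDBound S ((n - s) * (n - 1) + (n - 1)) := by
  have hI := hg.inter_nonempty he (by omega)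
  have hlength : (n - s - 1) * n + s = (n - s) * (n - 1) := by
    obtain ⟨r, rfl⟩ := Nat.exists_eq_add_of_lt hsn
    simp only [add_assoc, Nat.add_sub_cancel_left, Nat.add_sub_cancel]
    rw [← add_assoc, Nat.add_sub_cancel]
    ring
  refine (sssdBound_of_forall_mem_hasSSSD hS (m := (n - s) * (n - 1)) hI fun u hu => ?_).mono
    (Nat.add_le_add_left (Nat.sub_le_sub_left hI.card_pos n) _)
  have around_f := (hf.hasSignedWalk (hf.cycleVerts_eq_univ ▸ Finset.mem_univ u)).pow (n - s - 1)
  have around_f_e := around_f.append (he.hasSignedWalk (Finset.mem_of_mem_inter_right hu))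
  have around_g := (hg.hasSignedWalk (Finset.mem_of_mem_inter_left hu)).pow (n - s)
  exact hasSSSD_iff.2 ⟨_, _, hlength ▸ around_f_e, around_g, hne⟩

theorem pow_mul_ne_pow_of_pow_eq {M : Type*} [CommMonoidWithZero M] [IsCancelMulZero M]
    {x y z : M} {s r : ℕ} (hz : z ≠ 0) (hxz : x ^ s = z ^ (s + r + 1)) (hyz : y ^ s = z ^ (s + r))
    (hxy : x ^ (s + r) ≠ y ^ (s + r + 1)) : x ^ r * z ≠ y ^ (r + 1) := by
  refine fun h => hxy (mul_right_cancel₀ (pow_ne_zero (s + r + 1) hz) ?_)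
  calc x ^ (s + r) * z ^ (s + r + 1) = x ^ s * (x ^ r * z) * z ^ (s + r) := by
        rw [pow_add, pow_succ]; ac_rfl
    _ = z ^ (s + r + 1) * y ^ (r + 1) * y ^ s := by rw [hxz, h, hyz]
    _ = y ^ (s + r + 1) * z ^ (s + r + 1) := by
        rw [add_assoc s r 1, pow_add y s (r + 1)]; ac_rfl

theorem IsDistinguishedPair.sssdBound_of_hamiltonian (h : IsDistinguishedPair S f n g (n - 1))
    (hn : 6 ≤ n) (hS : Primitive (Underlying S)) {e : ℕ → Fin n} {s : ℕ}
    (he : IsCycleSeq (Underlying S) e s) (hs : s ≤ n - 2) : SSSDBound S (n * (n - 1) - 4) := by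
  by_cases hfe : walkSign S f n ^ s = walkSign S e s ^ n
  swap
  · exact IsDistinguishedPair.sssdBound_of_length_le ⟨h.left, he, hfe⟩ hn hS hs
  by_cases hge : walkSign S g (n - 1) ^ s = walkSign S e s ^ (n - 1)
  swap
  · exact IsDistinguishedPair.sssdBound_of_length_le ⟨h.right, he, hge⟩ hn hS hs
  have hs_ne_one : s ≠ 1 := by
    rintro rfl
    rw [pow_one] at hfe hge
    exact h.sign_ne (by rw [hfe, hge, pow_right_comm])
  have hs_two : 2 ≤ s := by have := he.1; omega
  obtain ⟨r, hr⟩ : ∃ r, n = s + r + 1 := ⟨n - s - 1, by omega⟩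
  have hpred : n - 1 = s + r := by omega
  have hne := pow_mul_ne_pow_of_pow_eq (r := r) he.walkSign_ne_zero (hfe.trans (by rw [← hr]))
    (hge.trans (by rw [hpred])) (by rw [← hr, ← hpred]; exact h.sign_ne)
  have hbound := sssdBound_of_hamiltonian_triple hS h.left h.right he hs_two (by omega)
    (by rwa [show n - s - 1 = r by omega, show n - s = r + 1 by omega])
  refine hbound.mono (Nat.le_sub_of_add_le ?_)
  rw [hpred, hr, show s + r + 1 - s = r + 1 by omega]
  nlinarith

theorem sssdBound_of_short_cycle (hn : 6 ≤ n) (hS : Primitive (Underlying S))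
    (hnp : NonPowerful S) (hf : IsCycleSeq (Underlying S) f p) (hp : p ≤ n - 2) :
    SSSDBound S (n * (n - 1) - 4) := by
  obtain ⟨g, q, g', q', h⟩ := exists_isDistinguishedPair hS hnp
  by_cases hq : q ≤ n - 2
  · exact h.symm.sssdBound_of_length_le hn hS hq
  by_cases hq' : q' ≤ n - 2
  · exact h.sssdBound_of_length_le hn hS hq'
  have hqn := h.left.length_le
  have hqn' := h.right.length_le
  rcases lt_trichotomy q q' with hlt | rfl | hlt
  · obtain rfl : q' = n := by omega
    obtain rfl : q = q' - 1 := by omega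
    exact h.symm.sssdBound_of_hamiltonian hn hS hf hp
  · have hne : walkSign S g q ≠ walkSign S g' q := fun heq => h.sign_ne (by rw [heq])
    refine (sssdBound_of_length_eq hS h.left h.right (by omega) hne).mono ?_
    have : n * 5 ≤ n * (n - 1) := Nat.mul_le_mul_left n (by omega)
    omega
  · obtain rfl : q = n := by omega
    obtain rfl : q' = q - 1 := by omega
    exact h.sssdBound_of_hamiltonian hn hS hf hp

/-! ### The upper base of a digraph with a short cycle -/

theorem setBase_le {M F : ℕ} {X : Finset (Fin n)} (hS : SSSDBound S M)
    (hX : ∀ t ≥ F, ∀ v, ∃ x ∈ X, HasWalk (Underlying S) x v t) : setBase S X ≤ F + M := by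
  refine Nat.sInf_le fun v => ?_
  obtain ⟨u, l, hl, huv⟩ := hS v
  obtain ⟨x, hx, hxu⟩ := hX (F + M - l) (by omega) u
  exact ⟨x, hx, Nat.sub_add_cancel (by omega : l ≤ F + M) ▸ hxu.append_hasSSSD huv⟩

theorem upperBase_le_of_short_cycle (hn : 6 ≤ n) {k : ℕ} (hk : 1 ≤ k) (hkn : k ≤ n)
    (hS : Primitive (Underlying S)) (hnp : NonPowerful S)
    (hf : IsCycleSeq (Underlying S) f p) (hp : p ≤ n - 2) :
    upperBase S k ≤ (2 * n - k) * (n - 1) - 3 := by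
  have hbound := sssdBound_of_short_cycle hn hS hnp hf hp
  have hlarge : n * 5 ≤ n * (n - 1) := Nat.mul_le_mul_left n (by omega)
  refine csSup_le' ?_
  rintro _ ⟨X, hX, rfl⟩
  rcases hkn.eq_or_lt with rfl | hlt
  · obtain rfl : X = Finset.univ := Finset.eq_univ_of_card _ (by rw [hX, Fintype.card_fin])
    have hbase := setBase_le (F := 0) (X := Finset.univ) hbound fun t _ v =>
      (hS.exists_hasWalk_to v t).imp fun x hxv => ⟨Finset.mem_univ x, hxv⟩
    rw [two_mul, Nat.add_sub_cancel]
    omega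
  · have hXne : X.Nonempty := Finset.card_pos.1 (hX ▸ hk)
    refine (setBase_le hbound fun t ht v => hS.exists_mem_hasWalk hf hXne ht v).trans ?_
    obtain ⟨a, rfl⟩ := Nat.exists_eq_add_of_lt hlt
    rw [hX, show k + a + 1 - k = a + 1 by omega, show 2 * (k + a + 1) - k = k + a + 1 + (a + 1) by
      omega]
    have hpa : a * p ≤ a * (k + a) := Nat.mul_le_mul_left a (by omega)
    simp only [Nat.add_sub_cancel, add_mul _ (a + 1), add_mul a 1, one_mul] at *
    omega

/-! ### Digraphs without short cycles -/

/-- Every cycle of `A` has length at least `m`; equivalently, so has every nontrivial closed walk,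
which is the form used here. -/
def GirthAtLeast (A : Fin n → Fin n → Prop) (m : ℕ) : Prop :=
  ∀ u l, 0 < l → HasWalk A u u l → m ≤ l

/-- The sequence `c` runs around a Hamiltonian cycle of `A` forever, so that indices count
modulo `n`. -/
structure IsHamiltonianSeq (A : Fin n → Fin n → Prop) (c : ℕ → Fin n) : Prop where
  periodic : ∀ i, c (i + n) = c i
  arc : ∀ i, A (c i) (c (i + 1))
  modEq : ∀ {i j}, c i = c j → i ≡ j [MOD n]

/-- `A` has a chord jumping over the vertex `c (i + 1)` of the Hamiltonian cycle `c`. -/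
def HasSkip (A : Fin n → Fin n → Prop) (c : ℕ → Fin n) (i : ℕ) : Prop :=
  A (c i) (c (i + 2))

variable {c : ℕ → Fin n} {i j : ℕ}

theorem IsCycleSeq.isHamiltonianSeq (hf : IsCycleSeq A f n) :
    IsHamiltonianSeq A fun i => f (i % n) where
  periodic i := by rw [Nat.add_mod_right]
  arc := hf.arc_mod
  modEq h := hf.2.2.2 _ (Nat.mod_lt _ hf.1) _ (Nat.mod_lt _ hf.1) h

theorem exists_isHamiltonianSeq (hn : 3 ≤ n) (hA : Primitive A)
    (hgirth : GirthAtLeast A (n - 1)) : ∃ c, IsHamiltonianSeq A c := by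
  obtain ⟨f, p, hf, hp⟩ := hA.exists_isCycleSeq_not_dvd (by omega) (d := n - 1) (by omega)
  obtain ⟨u, hu⟩ := hf.cycleVerts_nonempty
  have hle := hgirth u p hf.1 (hf.hasWalk_self hu)
  have hne : p ≠ n - 1 := fun h => hp h.symm.dvd
  obtain rfl : p = n := by have := hf.length_le; omega
  exact ⟨_, hf.isHamiltonianSeq⟩

namespace IsHamiltonianSeq

theorem shift (hc : IsHamiltonianSeq A c) (b : ℕ) : IsHamiltonianSeq A fun i => c (b + i) where
  periodic i := by rw [← add_assoc, hc.periodic]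
  arc i := hc.arc (b + i)
  modEq h := (hc.modEq h).add_left_cancel' b

theorem hasSkip_add (hc : IsHamiltonianSeq A c) : HasSkip A c (i + n) ↔ HasSkip A c i := by
  rw [HasSkip, add_right_comm, hc.periodic, hc.periodic, HasSkip]

theorem hasWalk (hc : IsHamiltonianSeq A c) (hij : i ≤ j) : HasWalk A (c i) (c j) (j - i) :=
  ⟨fun t => c (i + t), rfl, congrArg c (Nat.add_sub_cancel' hij), fun t _ => hc.arc (i + t)⟩

theorem hasWalk_return (hc : IsHamiltonianSeq A c) (hij : j ≤ i + n) :
    HasWalk A (c j) (c i) (i + n - j) :=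
  hc.periodic i ▸ hc.hasWalk hij

theorem bijective (hc : IsHamiltonianSeq A c) : Function.Bijective fun i : Fin n => c i :=
  Finite.injective_iff_bijective.1 fun i j h =>
    Fin.ext ((hc.modEq h).eq_of_lt_of_lt i.isLt j.isLt)

theorem exists_eq (hc : IsHamiltonianSeq A c) (v : Fin n) : ∃ i < n, c i = v :=
  let ⟨i, hi⟩ := hc.bijective.surjective v
  ⟨i, i.isLt, hi⟩

theorem eq_iff (hc : IsHamiltonianSeq A c) (hj : j < n) (hi : i < 2 * n) :
    c j = c i ↔ j = i ∨ j + n = i := by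
  constructor
  · intro h
    rcases lt_or_ge i n with hlt | hge
    · exact Or.inl ((hc.modEq h).eq_of_lt_of_lt hj hlt)
    · obtain ⟨m, rfl⟩ := Nat.exists_eq_add_of_le' hge
      rw [hc.periodic] at h
      exact Or.inr (congrArg (· + n) ((hc.modEq h).eq_of_lt_of_lt hj (by omega)))
  · rintro (rfl | rfl)
    · rfl
    · exact (hc.periodic j).symm

theorem arc_iff (hc : IsHamiltonianSeq A c) (hgirth : GirthAtLeast A (n - 1)) :
    A (c i) v ↔ v = c (i + 1) ∨ v = c (i + 2) ∧ HasSkip A c i := by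
  constructor
  · intro h
    obtain ⟨m, hm, rfl⟩ := (hc.shift (i + 1)).exists_eq v
    have hclosed := (hasWalk_one h).append (hc.hasWalk_return (i := i) (by omega))
    have hlength := hgirth _ _ (by omega) hclosed
    obtain rfl | rfl : m = 0 ∨ m = 1 := by omega
    · exact Or.inl rfl
    · exact Or.inr ⟨rfl, h⟩
  · rintro (rfl | ⟨rfl, h⟩)
    · exact hc.arc i
    · exact h

theorem not_hasSkip (hc : IsHamiltonianSeq A c) (hgirth : GirthAtLeast A (n - 1))
    (hi : HasSkip A c i) (hij : i + 2 ≤ j) (hji : j + 2 ≤ i + n) : ¬ HasSkip A c j := by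
  intro hj
  have hclosed := ((hasWalk_one hi).append (hc.hasWalk hij)).append
    ((hasWalk_one hj).append (hc.hasWalk_return hji))
  have := hgirth _ _ (by omega) hclosed
  omega

theorem eq_of_hasWalk (hc : IsHamiltonianSeq A c) (hgirth : GirthAtLeast A (n - 1))
    (hskip : ∀ i, ¬ HasSkip A c i) (h : HasWalk A (c i) v l) : v = c (i + l) := by
  obtain ⟨f, hstart, rfl, harc⟩ := h
  induction l with
  | zero => exact hstart
  | succ l ih =>
    have hlast := harc l l.lt_succ_self
    rw [ih fun j hj => harc j (hj.trans l.lt_succ_self), hc.arc_iff hgirth] at hlast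
    exact hlast.resolve_right fun h => hskip _ h.2

theorem exists_hasSkip (hc : IsHamiltonianSeq A c) (hgirth : GirthAtLeast A (n - 1))
    (hn : 2 ≤ n) (hA : Primitive A) : ∃ i, HasSkip A c i := by
  by_contra! hskip
  obtain ⟨f, p, hf, hp⟩ := hA.exists_isCycleSeq_not_dvd (by omega) (d := n) (by omega)
  obtain ⟨u, hu⟩ := hf.cycleVerts_nonempty
  obtain ⟨i, -, rfl⟩ := hc.exists_eq u
  have hmod : i + 0 ≡ i + p [MOD n] :=
    hc.modEq (hc.eq_of_hasWalk hgirth hskip (hf.hasWalk_self hu))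
  exact hp ((Nat.modEq_zero_iff_dvd).1 (hmod.add_left_cancel' i).symm)

theorem exists_hasSkip_not_hasSkip (hc : IsHamiltonianSeq A c) (hgirth : GirthAtLeast A (n - 1))
    (hn : 4 ≤ n) (hA : Primitive A) : ∃ i, HasSkip A c i ∧ ¬ HasSkip A c (i + (n - 1)) := by
  obtain ⟨i, hi⟩ := hc.exists_hasSkip hgirth (by omega) hA
  by_cases hprev : HasSkip A c (i + (n - 1))
  · refine ⟨_, hprev, ?_⟩
    rw [show i + (n - 1) + (n - 1) = i + (n - 2) + n by omega, hc.hasSkip_add]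
    exact hc.not_hasSkip hgirth hi (by omega) (by omega)
  · exact ⟨i, hi, hprev⟩

theorem exists_hasSkip_forall_lt_not_hasSkip (hc : IsHamiltonianSeq A c)
    (hgirth : GirthAtLeast A (n - 1)) (hn : 4 ≤ n) (hA : Primitive A) :
    ∃ c, IsHamiltonianSeq A c ∧ HasSkip A c (n - 2) ∧ ∀ i < n - 2, ¬ HasSkip A c i := by
  obtain ⟨b, hb, hprev⟩ := hc.exists_hasSkip_not_hasSkip hgirth hn hA
  have hc' := hc.shift (b + 2)
  have hskip : HasSkip A (fun i => c (b + 2 + i)) (n - 2) := by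
    rw [← hc.hasSkip_add, show b + n = b + 2 + (n - 2) by omega] at hb
    exact hb
  refine ⟨_, hc', hskip, fun i hi hi_skip => ?_⟩
  by_cases hlast : i = n - 3
  · rw [show b + (n - 1) = b + 2 + i by omega] at hprev
    exact hprev hi_skip
  · exact hc'.not_hasSkip hgirth hi_skip (by omega) (by omega) hskip

theorem digraphIso (hc : IsHamiltonianSeq A c) {B : Fin n → Fin n → Prop}
    (hB : ∀ i j : Fin n, A (c i) (c j) ↔ B i j) : DigraphIso A B := by
  let e := Equiv.ofBijective _ hc.bijective
  have he (u : Fin n) : c (e.symm u) = u := e.apply_symm_apply u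
  exact ⟨e.symm, fun u v => by rw [← hB, he, he]⟩

theorem arc_index_iff (hc : IsHamiltonianSeq A c) (hgirth : GirthAtLeast A (n - 1)) (hn : 2 ≤ n)
    (hi : i < n) (hj : j < n) :
    A (c i) (c j) ↔ (j = i + 1 ∨ j + n = i + 1) ∨
      (j = i + 2 ∨ j + n = i + 2) ∧ HasSkip A c i := by
  rw [hc.arc_iff hgirth, hc.eq_iff hj (by omega), hc.eq_iff hj (by omega)]

end IsHamiltonianSeq

theorem digraphIso_D1_or_D2 (hn : 4 ≤ n) (hA : Primitive A)
    (hgirth : GirthAtLeast A (n - 1)) : DigraphIso A (D1 n) ∨ DigraphIso A (D2 n) := by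
  obtain ⟨c₀, hc₀⟩ := exists_isHamiltonianSeq (by omega) hA hgirth
  obtain ⟨c, hc, hskip, hno_skip⟩ := hc₀.exists_hasSkip_forall_lt_not_hasSkip hgirth hn hA
  by_cases hlast : HasSkip A c (n - 1)
  · have hskip_iff : ∀ i < n, HasSkip A c i ↔ i = n - 2 ∨ i = n - 1 := by
      refine fun i hi => ⟨fun h => ?_, by rintro (rfl | rfl) <;> assumption⟩
      have := mt (hno_skip i) (not_not.2 h)
      omega
    refine Or.inr (hc.digraphIso fun i j => ?_)
    rw [hc.arc_index_iff hgirth (by omega) i.isLt j.isLt, hskip_iff i i.isLt]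
    simp only [D2, D1]
    omega
  · have hskip_iff : ∀ i < n, HasSkip A c i ↔ i = n - 2 := by
      refine fun i hi => ⟨fun h => ?_, by rintro rfl; exact hskip⟩
      have hi_ne : i ≠ n - 1 := by rintro rfl; exact hlast h
      have := mt (hno_skip i) (not_not.2 h)
      omega
    refine Or.inl (hc.digraphIso fun i j => ?_)
    rw [hc.arc_index_iff hgirth (by omega) i.isLt j.isLt, hskip_iff i i.isLt]
    simp only [D1]
    omega

theorem exists_short_cycle (hn : 4 ≤ n) (hA : Primitive A) (h1 : ¬ DigraphIso A (D1 n))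
    (h2 : ¬ DigraphIso A (D2 n)) : ∃ f p, IsCycleSeq A f p ∧ p ≤ n - 2 := by
  by_contra! hlong
  refine (digraphIso_D1_or_D2 hn hA fun u l hl hwalk => ?_).elim h1 h2
  obtain ⟨f, p, hf, hp⟩ := hwalk.exists_isCycleSeq_le hl
  have := hlong f p hf
  omega

end

theorem upperBase_le_other_general {n : ℕ} (hn : 6 ≤ n) (k : ℕ) (hk1 : 1 ≤ k) (hkn : k ≤ n)
    (S : Fin n → Fin n → ℤ) (hprim : Primitive (Underlying S)) (hnp : NonPowerful S)
    (h1 : ¬ DigraphIso (Underlying S) (D1 n))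
    (h2 : ¬ DigraphIso (Underlying S) (D2 n)) :
    upperBase S k ≤ (2 * n - k) * (n - 1) - 3 := by
  obtain ⟨f, p, hf, hp⟩ := exists_short_cycle (by omega) hprim h1 h2
  exact upperBase_le_of_short_cycle hn hk1 hkn hprim hnp hf hp

/-- Theorem 3.3: if `n ≥ 6` and the underlying digraph of the primitive non-powerful
signed digraph `S` is isomorphic to neither `D₁` nor `D₂`, then
`L(S,k) ≤ (2n-k)(n-1) - 3`. -/
theorem upperBase_le_other {n : ℕ} (hn : 6 ≤ n) (k : ℕ) (hk1 : 1 ≤ k) (hkn : k ≤ n)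
    (S : Fin n → Fin n → ℤ) (hsp : SignPattern S)
    (hprim : Primitive (Underlying S)) (hnp : NonPowerful S)
    (h1 : ¬ DigraphIso (Underlying S) (D1 n))
    (h2 : ¬ DigraphIso (Underlying S) (D2 n)) :
    upperBase S k ≤ (2 * n - k) * (n - 1) - 3 :=
  upperBase_le_other_general hn k hk1 hkn S hprim hnp h1 h2
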